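/- Let B be an N_e×N_b complex matrix, v ∈ ℂ^{N_e}, and let σ > 0, p > 0 be reals. Consider the optimization problem of minimizing f(Q) = vᴴ (B Q Bᴴ + σ² I)⁻¹ v over all Hermitian positive semidefinite matrices Q ∈ ℂ^{N_b×N_b} with tr(Q) ≤ p (the matrix B Q Bᴴ + σ² I is Hermitian positive definite, hence invertible, for every such Q). Then there exists a minimizer of rank at most one: there is a Hermitian positive semidefinite Q★ with tr(Q★) ≤ p and rank(Q★) ≤ 1 such that f(Q★) ≤ f(Q) for every Hermitian positive semidefinite Q with tr(Q) ≤ p. -/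

import Mathlib

open Matrix
open scoped ComplexOrder

namespace Matrix

variable {m n : Type*} [Fintype m] [Fintype n]

open scoped MatrixOrder Matrix.Norms.L2Operator in
/-- A positive semidefinite quadratic form is bounded by its trace times the squared norm. -/
theorem PosSemidef.dotProduct_mulVec_le_trace_mul {Q : Matrix n n ℂ} (hQ : Q.PosSemidef)
    (y : n → ℂ) : star y ⬝ᵥ (Q *ᵥ y) ≤ Q.trace * (star y ⬝ᵥ y) := by
  classical
  obtain ⟨C, rfl⟩ : ∃ C : Matrix n n ℂ, Q = Cᴴ * C :=
    CStarAlgebra.nonneg_iff_eq_star_mul_self.mp hQ.nonneg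
  have norm_form (z : n → ℂ) : star z ⬝ᵥ z = ((∑ i, ‖z i‖ ^ 2 : ℝ) : ℂ) := by
    simp [dotProduct, Complex.conj_mul']
  have trace_form : (Cᴴ * C).trace = ((∑ i, ∑ j, ‖C i j‖ ^ 2 : ℝ) : ℂ) := by
    rw [Finset.sum_comm]
    simp [trace, mul_apply, Complex.conj_mul']
  rw [← mulVec_mulVec, dotProduct_mulVec, ← star_mulVec, norm_form, norm_form, trace_form,
    ← Complex.ofReal_mul, Complex.real_le_real, Finset.sum_mul]
  refine Finset.sum_le_sum fun i _ => ?_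
  calc ‖(C *ᵥ y) i‖ ^ 2 ≤ (∑ j, ‖C i j‖ * ‖y j‖) ^ 2 := by
        gcongr
        simpa only [mulVec, dotProduct, norm_mul] using norm_sum_le Finset.univ fun j => C i j * y j
    _ ≤ _ := Finset.sum_mul_sq_le_sq_mul_sq _ _ _

/-- Completing the square gives a lower bound for the quadratic form of the inverse. -/
theorem PosDef.add_sub_le_dotProduct_inv_mulVec [DecidableEq m] {M : Matrix m m ℂ}
    (hM : M.PosDef) (v x : m → ℂ) :
    star v ⬝ᵥ x + star x ⬝ᵥ v - star x ⬝ᵥ (M *ᵥ x) ≤ star v ⬝ᵥ (M⁻¹ *ᵥ v) := by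
  have hdet : IsUnit M.det := (isUnit_iff_isUnit_det M).mp hM.isUnit
  have hMv : M *ᵥ (M⁻¹ *ᵥ v) = v := by
    rw [mulVec_mulVec, mul_nonsing_inv M hdet, one_mulVec]
  have hcross : star (M⁻¹ *ᵥ v) ⬝ᵥ (M *ᵥ x) = star v ⬝ᵥ x := by
    rw [dotProduct_mulVec]
    nth_rewrite 2 [← hM.isHermitian.eq]
    rw [← star_mulVec, hMv]
  have hself : star (M⁻¹ *ᵥ v) ⬝ᵥ v = star v ⬝ᵥ (M⁻¹ *ᵥ v) := by
    rw [star_mulVec, hM.isHermitian.inv.eq, ← dotProduct_mulVec]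
  have hsq := hM.posSemidef.dotProduct_mulVec_nonneg (M⁻¹ *ᵥ v - x)
  rw [mulVec_sub, hMv, star_sub, sub_dotProduct, dotProduct_sub, dotProduct_sub, hcross,
    hself] at hsq
  rw [← sub_nonneg]
  convert hsq using 1
  ring

theorem PosSemidef.conj_add_smul_one_posDef [DecidableEq m] {Q : Matrix n n ℂ}
    (hQ : Q.PosSemidef) (B : Matrix m n ℂ) {s : ℂ} (hs : 0 < s) :
    (B * Q * Bᴴ + s • (1 : Matrix m m ℂ)).PosDef :=
  PosDef.posSemidef_add (hQ.mul_mul_conjTranspose_same B) (PosDef.one.smul hs)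

theorem dotProduct_conj_add_smul_one_mulVec [DecidableEq m] (B : Matrix m n ℂ)
    (Q : Matrix n n ℂ) (s : ℂ) (x : m → ℂ) :
    star x ⬝ᵥ ((B * Q * Bᴴ + s • (1 : Matrix m m ℂ)) *ᵥ x) =
      star (Bᴴ *ᵥ x) ⬝ᵥ (Q *ᵥ (Bᴴ *ᵥ x)) + s * (star x ⬝ᵥ x) := by
  rw [add_mulVec, smul_mulVec, one_mulVec, dotProduct_add, dotProduct_smul, smul_eq_mul,
    ← mulVec_mulVec, ← mulVec_mulVec, dotProduct_mulVec, star_mulVec, conjTranspose_conjTranspose]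

end Matrix

/-- Lemma 1 of the paper: the optimization problem of minimizing
`f(Q) = vᴴ (B Q Bᴴ + σ² I)⁻¹ v` over Hermitian PSD matrices `Q` with `tr(Q) ≤ p`
admits a minimizer of rank at most one. -/
theorem rank_one_jamming_covariance_optimal
    (Ne Nb : ℕ) (B : Matrix (Fin Ne) (Fin Nb) ℂ) (v : Fin Ne → ℂ)
    (σ p : ℝ) (hσ : 0 < σ) (hp : 0 < p) :
    ∃ Qs : Matrix (Fin Nb) (Fin Nb) ℂ,
      Qs.PosSemidef ∧ Qs.trace ≤ (p : ℂ) ∧ Qs.rank ≤ 1 ∧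
      ∀ Q : Matrix (Fin Nb) (Fin Nb) ℂ, Q.PosSemidef → Q.trace ≤ (p : ℂ) →
        star v ⬝ᵥ ((B * Qs * Bᴴ + ((σ ^ 2 : ℝ) : ℂ) • 1)⁻¹ *ᵥ v) ≤
          star v ⬝ᵥ ((B * Q * Bᴴ + ((σ ^ 2 : ℝ) : ℂ) • 1)⁻¹ *ᵥ v) := by
  have hs : (0 : ℂ) < ((σ ^ 2 : ℝ) : ℂ) := Complex.zero_lt_real.mpr (by positivity)
  have hp' : (0 : ℂ) ≤ p := Complex.zero_le_real.mpr hp.le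
  generalize ((σ ^ 2 : ℝ) : ℂ) = s at hs ⊢
  set T := B * ((p : ℂ) • (1 : Matrix (Fin Nb) (Fin Nb) ℂ)) * Bᴴ + s • 1 with hT
  have hTpos : T.PosDef := (PosSemidef.one.smul hp').conj_add_smul_one_posDef B hs
  obtain ⟨x, hx⟩ : ∃ x, T *ᵥ x = v := by
    refine ⟨T⁻¹ *ᵥ v, ?_⟩
    rw [mulVec_mulVec, mul_nonsing_inv T ((isUnit_iff_isUnit_det T).mp hTpos.isUnit), one_mulVec]
  set y := Bᴴ *ᵥ x with hy
  have hyy : 0 ≤ star y ⬝ᵥ y := dotProduct_star_self_nonneg y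
  set c : ℂ := p / (star y ⬝ᵥ y) with hc
  have hc0 : 0 ≤ c := div_nonneg hp' hyy
  have hQs : (c • vecMulVec y (star y)).PosSemidef := (posSemidef_vecMulVec_self_star y).smul hc0
  have hQsy : (c • vecMulVec y (star y)) *ᵥ y = (p : ℂ) • y := by
    rw [smul_mulVec, vecMulVec_mulVec, op_smul_eq_smul, smul_smul]
    by_cases h : star y ⬝ᵥ y = 0
    · simp [dotProduct_star_self_eq_zero.mp h]
    · rw [hc, div_mul_cancel₀ _ h]
  have hQsx : (B * (c • vecMulVec y (star y)) * Bᴴ + s • 1) *ᵥ x = v := by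
    rw [← hx, hT, add_mulVec, add_mulVec, ← mulVec_mulVec, ← mulVec_mulVec, ← hy, hQsy,
      ← mulVec_mulVec, ← mulVec_mulVec, ← hy, smul_mulVec _ 1 y, one_mulVec]
  have hself : star x ⬝ᵥ v = star v ⬝ᵥ x := by
    rw [← hx, star_mulVec, hTpos.isHermitian.eq, ← dotProduct_mulVec]
  refine ⟨c • vecMulVec y (star y), hQs, ?_, ?_, fun Q hQ htr => ?_⟩
  · rw [trace_smul, trace_vecMulVec, smul_eq_mul, dotProduct_comm]
    by_cases h : star y ⬝ᵥ y = 0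
    · simpa [h] using hp'
    · rw [hc, div_mul_cancel₀ _ h]
  · rw [← smul_vecMulVec]
    exact rank_vecMulVec_le _ _
  · have hdet := (isUnit_iff_isUnit_det _).mp (hQs.conj_add_smul_one_posDef B hs).isUnit
    have hinv : (B * (c • vecMulVec y (star y)) * Bᴴ + s • 1)⁻¹ *ᵥ v = x := by
      rw [← hQsx, mulVec_mulVec, nonsing_inv_mul _ hdet, one_mulVec]
    have hbound : star x ⬝ᵥ ((B * Q * Bᴴ + s • 1) *ᵥ x) ≤ star v ⬝ᵥ x := by
      rw [← hself, ← hx, hT, dotProduct_conj_add_smul_one_mulVec,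
        dotProduct_conj_add_smul_one_mulVec, ← hy, smul_mulVec, one_mulVec, dotProduct_smul,
        smul_eq_mul]
      gcongr
      exact (hQ.dotProduct_mulVec_le_trace_mul y).trans (mul_le_mul_of_nonneg_right htr hyy)
    rw [hinv]
    calc star v ⬝ᵥ x ≤ star v ⬝ᵥ x + star x ⬝ᵥ v - star x ⬝ᵥ ((B * Q * Bᴴ + s • 1) *ᵥ x) := by
          rw [hself, add_sub_assoc]
          exact le_add_of_nonneg_right (sub_nonneg.mpr hbound)
      _ ≤ _ := (hQ.conj_add_smul_one_posDef B hs).add_sub_le_dotProduct_inv_mulVec v x
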